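/- Assume M is finite-dimensional over K and the polar bilinear form of Q is nondegenerate. Let A ∈ Cl(Q) satisfy ι(x)·A = α(A)·ι(x) for every vector x ∈ M (equivalently, the left contraction x ⌟ A = (1/2)(ι(x)·A − α(A)·ι(x)) vanishes for all x). Then A is a scalar: A lies in the image of algebraMap K Cl(Q). -/

import Mathlib

open CliffordAlgebra

namespace CliffordAlgebra

variable {R M : Type*} [CommRing R] [AddCommGroup M] [Module R M] {Q : QuadraticForm R M}

/-- Contraction by the polar form of a vector is the twisted commutator with that vector. -/
theorem contractLeft_polarBilin (x : M) (A : CliffordAlgebra Q) :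
    contractLeft (QuadraticMap.polarBilin Q x) A = ι Q x * A - involute A * ι Q x := by
  induction A using CliffordAlgebra.left_induction with
  | algebraMap r =>
    rw [contractLeft_algebraMap, AlgHom.commutes, Algebra.commutes, sub_self]
  | add a b ha hb => rw [map_add, ha, hb, map_add]; noncomm_ring
  | ι_mul a m ha =>
    rw [contractLeft_ι_mul, ha, map_mul, involute_ι, Algebra.smul_def,
      QuadraticMap.polarBilin_apply_apply, ← ι_mul_ι_add_swap]
    noncomm_ring

/-- On the subalgebra generated by vectors killed by `d`, contraction by `d` acts as on
twisted scalars. -/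
theorem contractLeft_mul_of_mem_adjoin {d : Module.Dual R M} {s : Set M} (hs : ∀ m ∈ s, d m = 0)
    {x : CliffordAlgebra Q} (hx : x ∈ Algebra.adjoin R (ι Q '' s)) (y : CliffordAlgebra Q) :
    contractLeft d (x * y) = involute x * contractLeft d y := by
  induction hx using Algebra.adjoin_induction generalizing y with
  | mem x hx =>
    obtain ⟨m, hm, rfl⟩ := hx
    rw [contractLeft_ι_mul, hs m hm, zero_smul, zero_sub, involute_ι, neg_mul]
  | algebraMap r => rw [contractLeft_algebraMap_mul, AlgHom.commutes]
  | add a b _ _ ha hb => rw [add_mul, map_add, ha, hb, map_add, add_mul]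
  | mul a b _ _ ha hb => rw [mul_assoc, ha, hb, map_mul, mul_assoc]

theorem contractLeft_eq_zero_of_mem_adjoin {d : Module.Dual R M} {s : Set M}
    (hs : ∀ m ∈ s, d m = 0) {x : CliffordAlgebra Q} (hx : x ∈ Algebra.adjoin R (ι Q '' s)) :
    contractLeft d x = 0 := by
  simpa using contractLeft_mul_of_mem_adjoin hs hx 1

/-- The subalgebra generated by `insert v s` is `S + ι v * S`, where `S` is generated by `s`. -/
theorem exists_eq_add_ι_mul_of_mem_adjoin_insert {v : M} {s : Set M} {x : CliffordAlgebra Q}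
    (hx : x ∈ Algebra.adjoin R (ι Q '' insert v s)) :
    ∃ b ∈ Algebra.adjoin R (ι Q '' s), ∃ c ∈ Algebra.adjoin R (ι Q '' s), x = b + ι Q v * c := by
  suffices H : ∀ b ∈ Algebra.adjoin R (ι Q '' s), ∀ c ∈ Algebra.adjoin R (ι Q '' s),
      ∃ b' ∈ Algebra.adjoin R (ι Q '' s), ∃ c' ∈ Algebra.adjoin R (ι Q '' s),
        x * (b + ι Q v * c) = b' + ι Q v * c' by
    simpa using H 1 (one_mem _) 0 (zero_mem _)
  induction hx using Algebra.adjoin_induction with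
  | mem x hx =>
    intro b hb c hc
    obtain ⟨m, rfl | hm, rfl⟩ := hx
    · refine ⟨Q m • c, Subalgebra.smul_mem _ hc _, b, hb, ?_⟩
      rw [mul_add, ← mul_assoc, ι_sq_scalar, Algebra.smul_def, add_comm]
    · have hιm : ι Q m ∈ Algebra.adjoin R (ι Q '' s) := Algebra.subset_adjoin ⟨m, hm, rfl⟩
      refine ⟨ι Q m * b + QuadraticMap.polar Q m v • c,
        add_mem (mul_mem hιm hb) (Subalgebra.smul_mem _ hc _), -(ι Q m * c),
        neg_mem (mul_mem hιm hc), ?_⟩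
      rw [Algebra.smul_def, ← ι_mul_ι_add_swap]
      noncomm_ring
  | algebraMap r =>
    intro b hb c hc
    refine ⟨r • b, Subalgebra.smul_mem _ hb _, r • c, Subalgebra.smul_mem _ hc _, ?_⟩
    rw [← Algebra.smul_def, smul_add, mul_smul_comm]
  | add x y _ _ hx hy =>
    intro b hb c hc
    obtain ⟨b₁, hb₁, c₁, hc₁, h₁⟩ := hx b hb c hc
    obtain ⟨b₂, hb₂, c₂, hc₂, h₂⟩ := hy b hb c hc
    refine ⟨b₁ + b₂, add_mem hb₁ hb₂, c₁ + c₂, add_mem hc₁ hc₂, ?_⟩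
    rw [add_mul, h₁, h₂]
    noncomm_ring
  | mul x y _ _ hx hy =>
    intro b hb c hc
    obtain ⟨b₁, hb₁, c₁, hc₁, h₁⟩ := hy b hb c hc
    rw [mul_assoc, h₁]
    exact hx b₁ hb₁ c₁ hc₁

/-- A generator dual to `d` can be dropped from an element whose contraction by `d` vanishes. -/
theorem mem_adjoin_of_mem_adjoin_insert {d : Module.Dual R M} {v : M} {s : Set M} (hv : d v = 1)
    (hs : ∀ m ∈ s, d m = 0) {x : CliffordAlgebra Q}
    (hx : x ∈ Algebra.adjoin R (ι Q '' insert v s)) (hdx : contractLeft d x = 0) :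
    x ∈ Algebra.adjoin R (ι Q '' s) := by
  obtain ⟨b, hb, c, hc, rfl⟩ := exists_eq_add_ι_mul_of_mem_adjoin_insert hx
  rw [map_add, contractLeft_ι_mul, contractLeft_eq_zero_of_mem_adjoin hs hb,
    contractLeft_eq_zero_of_mem_adjoin hs hc, hv, one_smul, mul_zero, sub_zero, zero_add] at hdx
  simpa [hdx] using hb

/-- An element of the Clifford algebra of a finite free module all of whose contractions by
coordinate functions vanish is a scalar. -/
theorem mem_bot_of_forall_contractLeft_coord_eq_zero {n : Type*} [Finite n]
    (b : Module.Basis n R M) {A : CliffordAlgebra Q} (h : ∀ i, contractLeft (b.coord i) A = 0) :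
    A ∈ (⊥ : Subalgebra R (CliffordAlgebra Q)) := by
  classical
  have key (t : Finset n) (ht : A ∈ Algebra.adjoin R (ι Q '' (b '' t))) :
      A ∈ (⊥ : Subalgebra R (CliffordAlgebra Q)) := by
    induction t using Finset.induction_on with
    | empty => simpa using ht
    | insert i t hi ih =>
      refine ih (mem_adjoin_of_mem_adjoin_insert (d := b.coord i) (v := b i) (by simp) ?_ ?_ (h i))
      · rintro _ ⟨j, hj, rfl⟩
        have hji : j ≠ i := fun hji => hi (hji ▸ hj)
        simp [hji]
      · rwa [Finset.coe_insert, Set.image_insert_eq] at ht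
  have := Fintype.ofFinite n
  refine key Finset.univ ?_
  rw [Finset.coe_univ, Set.image_univ, ← Algebra.adjoin_span, Submodule.span_image, b.span_eq,
    Submodule.map_top, LinearMap.coe_range, adjoin_range_ι]
  exact Algebra.mem_top

end CliffordAlgebra

/-- **Contraction Lemma**: over a finite-dimensional space with nondegenerate polar form,
if `ι(x)·A = α(A)·ι(x)` for every vector `x` (i.e. the left contraction `x ⌟ A` vanishes
for all `x`), then `A` is a scalar. -/
theorem mem_range_algebraMap_of_forall_ι_mul_eq {K M : Type*} [Field K]
    [Invertible (2 : K)] [AddCommGroup M] [Module K M] [FiniteDimensional K M]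
    {Q : QuadraticForm K M}
    (hQ : (QuadraticMap.polarBilin Q).Nondegenerate)
    (A : CliffordAlgebra Q)
    (h : ∀ x : M, ι Q x * A = involute A * ι Q x) :
    ∃ c : K, A = algebraMap K (CliffordAlgebra Q) c := by
  have hcontract (d : Module.Dual K M) : contractLeft d A = 0 := by
    have hd : QuadraticMap.polarBilin Q ((LinearMap.BilinForm.toDual _ hQ).symm d) = d :=
      (LinearMap.BilinForm.toDual _ hQ).apply_symm_apply d
    rw [← hd, contractLeft_polarBilin, h, sub_self]
  obtain ⟨c, hc⟩ := Algebra.mem_bot.mp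
    (mem_bot_of_forall_contractLeft_coord_eq_zero (Module.finBasis K M) fun _ => hcontract _)
  exact ⟨c, hc.symm⟩
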